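/- Assume dom f ≠ ∅ and P = ℝⁿ × ℝˢ, and assume the benchmark distribution ν has finite first moment (ν ∈ 𝓜¹₁). Then the multifunction C₂ is closed with respect to the topology of weak convergence: for any sequences {μ_l} ⊆ 𝓜¹_s and {x_l} ⊆ ℝⁿ with μ_l → μ ∈ 𝓜¹_s weakly, x_l → x, and x_l ∈ C₂(μ_l) for all l ∈ ℕ, it holds that x ∈ C₂(μ). -/

import Mathlib

open MeasureTheory Matrix Set Topology Filter
open scoped ENNReal NNReal

noncomputable section

/-- Feasible set of the lower level problem: `{ y | A y ≤ T x + z }`. -/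
def LowerFeas {n m s : ℕ} (A : Matrix (Fin s) (Fin m) ℝ) (T : Matrix (Fin s) (Fin n) ℝ)
    (x : Fin n → ℝ) (z : Fin s → ℝ) : Set (Fin m → ℝ) :=
  {y | A.mulVec y ≤ T.mulVec x + z}

/-- Lower level optimal solution set `Ψ(x,z) = Argmin { dᵀy | A y ≤ T x + z }`. -/
def Psi {n m s : ℕ} (d : Fin m → ℝ) (A : Matrix (Fin s) (Fin m) ℝ)
    (T : Matrix (Fin s) (Fin n) ℝ) (x : Fin n → ℝ) (z : Fin s → ℝ) : Set (Fin m → ℝ) :=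
  {y | y ∈ LowerFeas A T x z ∧ ∀ y' ∈ LowerFeas A T x z, d ⬝ᵥ y ≤ d ⬝ᵥ y'}

/-- `f(x,z) = cᵀx + inf { qᵀ y | y ∈ Ψ(x,z) }` with values in `ℝ ∪ {±∞}`
(the infimum over the empty set being `+∞`). -/
def fE {n m s : ℕ} (c : Fin n → ℝ) (q d : Fin m → ℝ) (A : Matrix (Fin s) (Fin m) ℝ)
    (T : Matrix (Fin s) (Fin n) ℝ) (x : Fin n → ℝ) (z : Fin s → ℝ) : EReal :=
  ((c ⬝ᵥ x : ℝ) : EReal) + sInf ((fun y => ((q ⬝ᵥ y : ℝ) : EReal)) '' Psi d A T x z)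

/-- `P = { (x,z) | ∃ y, A y ≤ T x + z }`. -/
def Pfeas {n m s : ℕ} (A : Matrix (Fin s) (Fin m) ℝ) (T : Matrix (Fin s) (Fin n) ℝ) :
    Set ((Fin n → ℝ) × (Fin s → ℝ)) :=
  {p | (LowerFeas A T p.1 p.2).Nonempty}

/-- `dom f = { (x,z) | f(x,z) ∈ ℝ }`. -/
def domf {n m s : ℕ} (c : Fin n → ℝ) (q d : Fin m → ℝ) (A : Matrix (Fin s) (Fin m) ℝ)
    (T : Matrix (Fin s) (Fin n) ℝ) : Set ((Fin n → ℝ) × (Fin s → ℝ)) :=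
  {p | fE c q d A T p.1 p.2 ≠ ⊤ ∧ fE c q d A T p.1 p.2 ≠ ⊥}

/-- Topological support of a Borel measure. -/
def msupport {s : ℕ} (μ : Measure (Fin s → ℝ)) : Set (Fin s → ℝ) :=
  {z | ∀ U : Set (Fin s → ℝ), IsOpen U → z ∈ U → μ U ≠ 0}

/-- `P_Z = { x | (x,z) ∈ P for all z ∈ supp μ_Z }`. -/
def PZSet {n m s : ℕ} (A : Matrix (Fin s) (Fin m) ℝ) (T : Matrix (Fin s) (Fin n) ℝ)
    (μZ : Measure (Fin s → ℝ)) : Set (Fin n → ℝ) :=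
  {x | ∀ z ∈ msupport μZ, (x, z) ∈ Pfeas A T}


/-- A polyhedron: solution set of finitely many linear inequalities. -/
def IsPolyhedron {n : ℕ} (X : Set (Fin n → ℝ)) : Prop :=
  ∃ (k : ℕ) (B : Matrix (Fin k) (Fin n) ℝ) (b : Fin k → ℝ), X = {x | B.mulVec x ≤ b}

/-- An atomless probability space: every set of positive measure has a measurable
subset of strictly smaller positive measure. -/
def AtomlessSpace {Ω : Type*} [MeasurableSpace Ω] (μ : Measure Ω) : Prop :=
  ∀ S : Set Ω, MeasurableSet S → 0 < μ S →
    ∃ B ⊆ S, MeasurableSet B ∧ 0 < μ B ∧ μ B < μ S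

/-- A set of Borel probability measures is locally uniformly `‖·‖^p`-integrating if around
every member there is a weakly open neighbourhood on which the `p`-th moment tails vanish
uniformly (the limit as `a → ∞` of the antitone tail suprema being their infimum). -/
def LocUnifIntegrating {s : ℕ} (pr : ℝ) (M : Set (ProbabilityMeasure (Fin s → ℝ))) : Prop :=
  ∀ μ ∈ M, ∀ ε : ℝ, 0 < ε →
    ∃ N : Set (ProbabilityMeasure (Fin s → ℝ)), IsOpen N ∧ μ ∈ N ∧
      ⨅ a : ℝ, ⨆ ν ∈ M ∩ N,
        ∫⁻ z in {z : Fin s → ℝ | a ≤ ‖z‖}, ENNReal.ofReal (‖z‖ ^ pr)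
          ∂(ν : Measure (Fin s → ℝ)) ≤ ENNReal.ofReal ε

/-- Feasible set under first-order stochastic dominance constraints. -/
def C1 {n m s : ℕ} (c : Fin n → ℝ) (q d : Fin m → ℝ) (A : Matrix (Fin s) (Fin m) ℝ)
    (T : Matrix (Fin s) (Fin n) ℝ) (X : Set (Fin n → ℝ)) (ν : Measure ℝ)
    (μ : ProbabilityMeasure (Fin s → ℝ)) : Set (Fin n → ℝ) :=
  {x ∈ X | ∀ β : ℝ,
    ν (Set.Iic β) ≤ (μ : Measure (Fin s → ℝ)) {z | fE c q d A T x z ≤ (β : EReal)}}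

/-- Feasible set under second-order stochastic dominance constraints. -/
def C2 {n m s : ℕ} (c : Fin n → ℝ) (q d : Fin m → ℝ) (A : Matrix (Fin s) (Fin m) ℝ)
    (T : Matrix (Fin s) (Fin n) ℝ) (X : Set (Fin n → ℝ)) (ν : Measure ℝ)
    (μ : ProbabilityMeasure (Fin s → ℝ)) : Set (Fin n → ℝ) :=
  {x ∈ X | ∀ η : ℝ,
    ∫ z, max ((fE c q d A T x z).toReal - η) 0 ∂(μ : Measure (Fin s → ℝ))
      ≤ ∫ b, max (b - η) 0 ∂ν}

theorem hoffman_aux (m : ℕ) : ∀ (ι : Type) [Fintype ι] (B : ι → Fin m → ℝ),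
    ∃ L : ℝ, 0 ≤ L ∧ ∀ (b : ι → ℝ) (y : Fin m → ℝ) (ε : ℝ), 0 ≤ ε →
      (∀ i, B i ⬝ᵥ y ≤ b i + ε) →
      (∀ δ : ℝ, 0 < δ → ∃ y' : Fin m → ℝ, ∀ i, B i ⬝ᵥ y' ≤ b i + δ) →
      ∃ y' : Fin m → ℝ, (∀ i, B i ⬝ᵥ y' ≤ b i) ∧ ∀ j, |y' j - y j| ≤ L * ε := by
  induction m with
  | zero =>
    intro ι _ B
    refine ⟨0, le_rfl, fun b y ε hε hy hap => ⟨y, fun i => ?_, fun j => j.elim0⟩⟩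
    apply le_of_forall_pos_le_add
    intro δ hδ
    obtain ⟨y', hy'⟩ := hap δ hδ
    rw [Subsingleton.elim y y']
    exact hy' i
  | succ m ih =>
    intro ι _ B
    classical
    set a : ι → ℝ := fun i => B i 0 with ha
    set B' : ι → Fin m → ℝ := fun i j => B i j.succ with hB'
    have hdot : ∀ i (y : Fin (m+1) → ℝ), B i ⬝ᵥ y = a i * y 0 + B' i ⬝ᵥ (fun j => y j.succ) := by
      intro i y
      simp [dotProduct, Fin.sum_univ_succ, ha, hB']
    let al : ι × ι → ℝ := fun p => if a p.1 = 0 then 1 else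
      if 0 < a p.1 ∧ a p.2 < 0 then (a p.1)⁻¹ else 0
    let be : ι × ι → ℝ := fun p => if a p.1 = 0 then 0 else
      if 0 < a p.1 ∧ a p.2 < 0 then (-a p.2)⁻¹ else 0
    have hal : ∀ p, 0 ≤ al p := by
      intro p; simp only [al]; split_ifs with h1 h2
      · exact zero_le_one
      · exact inv_nonneg.2 h2.1.le
      · exact le_rfl
    have hbe : ∀ p, 0 ≤ be p := by
      intro p; simp only [be]; split_ifs with h1 h2
      · exact le_rfl
      · exact inv_nonneg.2 (by linarith [h2.2])
      · exact le_rfl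
    have hcan : ∀ p, al p * a p.1 + be p * a p.2 = 0 := by
      intro p; simp only [al, be]; split_ifs with h1 h2
      · simp [h1]
      · have := h2.1.ne'
        have := h2.2.ne
        field_simp
        ring
      · simp
    let C : ℝ := 1 + ∑ p, (al p + be p)
    have hC : ∀ p, al p + be p ≤ C := by
      intro p
      have : al p + be p ≤ ∑ p, (al p + be p) :=
        Finset.single_le_sum (f := fun p => al p + be p)
          (fun i _ => add_nonneg (hal i) (hbe i)) (Finset.mem_univ p)
      simp only [C]; linarith
    have hC1 : 1 ≤ C := by
      have : 0 ≤ ∑ p, (al p + be p) := Finset.sum_nonneg fun i _ => add_nonneg (hal i) (hbe i)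
      simp only [C]; linarith
    obtain ⟨L', hL', IH⟩ := ih (ι × ι) (fun p => al p • B' p.1 + be p • B' p.2)
    have hFM : ∀ (b : ι → ℝ) (y : Fin (m+1) → ℝ) (ε : ℝ), 0 ≤ ε → (∀ i, B i ⬝ᵥ y ≤ b i + ε) →
        ∀ p : ι × ι, (al p • B' p.1 + be p • B' p.2) ⬝ᵥ (fun j => y j.succ) ≤
          (al p * b p.1 + be p * b p.2) + C * ε := by
      intro b y ε hε hy p
      have h1 := mul_le_mul_of_nonneg_left (hy p.1) (hal p)
      have h2 := mul_le_mul_of_nonneg_left (hy p.2) (hbe p)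
      have h3 := mul_le_mul_of_nonneg_right (hC p) hε
      rw [hdot] at h1 h2
      rw [add_dotProduct, smul_dotProduct, smul_dotProduct, smul_eq_mul, smul_eq_mul]
      have h4 : (al p * a p.1 + be p * a p.2) * y 0 = 0 := by rw [hcan]; ring
      nlinarith
    let S : ι → ℝ := fun i => ∑ j, |B' i j|
    have hS : ∀ i, 0 ≤ S i := fun i => Finset.sum_nonneg fun j _ => abs_nonneg _
    let k : ι → ℝ := fun i => (1 + S i * (L' * C)) / |a i|
    have hk : ∀ i, 0 ≤ k i := fun i => div_nonneg (by have := hS i; positivity) (abs_nonneg _)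
    let K : ℝ := ∑ i, k i
    have hkK : ∀ i, k i ≤ K := fun i =>
      Finset.single_le_sum (f := k) (fun i _ => hk i) (Finset.mem_univ i)
    have hK : 0 ≤ K := Finset.sum_nonneg fun i _ => hk i
    have hLC : 0 ≤ L' * C := by positivity
    refine ⟨K + L' * C, by positivity, fun b y ε hε hy hap => ?_⟩
    obtain ⟨w, hw, hwd⟩ := IH (fun p => al p * b p.1 + be p * b p.2) (fun j => y j.succ) (C * ε)
      (by positivity) (hFM b y ε hε hy) (by
        intro δ hδ
        obtain ⟨y', hy'⟩ := hap (δ / C) (by positivity)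
        refine ⟨_, fun p => (hFM b y' (δ / C) (by positivity) hy' p).trans (le_of_eq ?_)⟩
        have : C ≠ 0 := by positivity
        field_simp)
    simp only [add_dotProduct, smul_dotProduct, smul_eq_mul] at hw
    -- residuals
    let r : ι → ℝ := fun i => b i - B' i ⬝ᵥ w
    have hr : ∀ i, a i * y 0 ≤ r i + (1 + S i * (L' * C)) * ε := by
      intro i
      have h1 := hy i
      rw [hdot] at h1
      have h2 : B' i ⬝ᵥ w - B' i ⬝ᵥ (fun j => y j.succ) ≤ S i * (L' * (C * ε)) := by
        rw [← dotProduct_sub]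
        simp only [dotProduct, S, Finset.sum_mul]
        refine Finset.sum_le_sum fun j _ => ?_
        refine (le_abs_self _).trans ?_
        rw [abs_mul]
        exact mul_le_mul_of_nonneg_left (hwd j) (abs_nonneg _)
      simp only [r]
      nlinarith
    have hKe : 0 ≤ K * ε := by positivity
    have hup : ∀ i, 0 < a i → y 0 - K * ε ≤ r i / a i := by
      intro i hi
      rw [le_div_iff₀ hi]
      have h1 := mul_le_mul_of_nonneg_right (hkK i) hε
      have h2 : k i * a i = 1 + S i * (L' * C) := by
        simp only [k, abs_of_pos hi]; field_simp
      have h3 := mul_le_mul_of_nonneg_right h1 hi.le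
      have h4 := hr i
      rw [← h2] at h4
      nlinarith
    have hlo : ∀ i, a i < 0 → r i / a i ≤ y 0 + K * ε := by
      intro i hi
      rw [div_le_iff_of_neg hi]
      have h1 := mul_le_mul_of_nonneg_right (hkK i) hε
      have h2 : k i * (-a i) = 1 + S i * (L' * C) := by
        have : -a i ≠ 0 := by linarith
        simp only [k, abs_of_neg hi]; exact div_mul_cancel₀ _ this
      have h3 := mul_le_mul_of_nonneg_right h1 (by linarith : 0 ≤ -a i)
      have h4 := hr i
      rw [← h2] at h4
      nlinarith
    have hlu : ∀ i j, 0 < a i → a j < 0 → r j / a j ≤ r i / a i := by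
      intro i j hi hj
      have h := hw (i, j)
      have e1 : al (i, j) = (a i)⁻¹ := by simp [al, hi.ne', hi, hj]
      have e2 : be (i, j) = (-a j)⁻¹ := by simp [be, hi.ne', hi, hj]
      rw [e1, e2] at h
      simp only at h
      have : r j / a j = - ((-a j)⁻¹ * r j) := by rw [inv_neg]; ring
      rw [this, div_eq_inv_mul]
      simp only [r]
      nlinarith
    let Q : Set ℝ := insert (y 0 - K * ε) ((fun j => r j / a j) '' {j | a j < 0})
    have hQne : Q.Nonempty := ⟨_, mem_insert _ _⟩
    have hQb : ∀ v ∈ Q, v ≤ y 0 + K * ε := by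
      rintro v (rfl | ⟨j, hj, rfl⟩)
      · linarith
      · exact hlo j hj
    have hQbd : BddAbove Q := ⟨_, hQb⟩
    let t : ℝ := sSup Q
    have ht1 : y 0 - K * ε ≤ t := le_csSup hQbd (mem_insert _ _)
    have ht2 : t ≤ y 0 + K * ε := csSup_le hQne hQb
    have ht3 : ∀ j, a j < 0 → r j / a j ≤ t := fun j hj =>
      le_csSup hQbd (mem_insert_of_mem _ ⟨j, hj, rfl⟩)
    have ht4 : ∀ i, 0 < a i → t ≤ r i / a i := by
      intro i hi
      refine csSup_le hQne ?_
      rintro v (rfl | ⟨j, hj, rfl⟩)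
      · exact hup i hi
      · exact hlu i j hi hj
    refine ⟨Fin.cons t w, fun i => ?_, fun j => ?_⟩
    · rw [hdot]
      simp only [Fin.cons_zero, Fin.cons_succ]
      suffices a i * t ≤ r i by simp only [r] at this; linarith
      rcases lt_trichotomy (a i) 0 with h | h | h
      · have := ht3 i h
        rw [div_le_iff_of_neg h] at this
        linarith
      · have h1 := hw (i, i)
        have e1 : al (i, i) = 1 := by simp [al, h]
        have e2 : be (i, i) = 0 := by simp [be, h]
        rw [e1, e2] at h1
        simp only at h1
        simp only [r, h]
        linarith
      · have := ht4 i h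
        rw [le_div_iff₀ h] at this
        linarith
    · have hp : 0 ≤ L' * C * ε := by positivity
      refine Fin.cases ?_ (fun j => ?_) j
      · simp only [Fin.cons_zero]
        rw [abs_le]; constructor <;> nlinarith
      · simp only [Fin.cons_succ]
        have := hwd j
        nlinarith

theorem psi_nonempty {n m s : ℕ} (d : Fin m → ℝ)
    (A : Matrix (Fin s) (Fin m) ℝ) (T : Matrix (Fin s) (Fin n) ℝ)
    (y0 : Fin m → ℝ) (hy0 : ∀ i, (A.mulVec y0) i ≤ -1)
    (x0 : Fin n → ℝ) (z0 : Fin s → ℝ) (h0 : (Psi d A T x0 z0).Nonempty)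
    (x : Fin n → ℝ) (z : Fin s → ℝ) (hne : (LowerFeas A T x z).Nonempty) :
    (Psi d A T x z).Nonempty := by
  obtain ⟨p, hp, hpmin⟩ := h0
  let W : Set ℝ := (fun y => d ⬝ᵥ y) '' LowerFeas A T x z
  have hWne : W.Nonempty := hne.image _
  let D : ℝ := ‖(T.mulVec x + z) - (T.mulVec x0 + z0)‖
  have hD : ∀ i, |(T.mulVec x + z) i - (T.mulVec x0 + z0) i| ≤ D := fun i =>
    norm_le_pi_norm ((T.mulVec x + z) - (T.mulVec x0 + z0)) i
  have hD0 : 0 ≤ D := norm_nonneg _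
  have hWb : BddBelow W := by
    refine ⟨d ⬝ᵥ p - D * (d ⬝ᵥ y0), ?_⟩
    rintro _ ⟨y, hy, rfl⟩
    have h1 : y + D • y0 ∈ LowerFeas A T x0 z0 := by
      intro i
      have h2 := hy i
      have h3 := (abs_le.1 (hD i)).2
      have h4 := mul_le_mul_of_nonneg_left (hy0 i) hD0
      rw [mulVec_add, mulVec_smul]
      simp only [Pi.add_apply, Pi.smul_apply, smul_eq_mul] at *
      linarith
    have h5 := hpmin _ h1
    rw [dotProduct_add, dotProduct_smul, smul_eq_mul] at h5
    simp only
    linarith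
  let r : ℝ := sInf W
  obtain ⟨L, hL, H⟩ := hoffman_aux m (Option (Fin s)) (fun o => o.elim d (fun i => A i))
  obtain ⟨y1, hy1⟩ := hne
  have hap : ∀ δ : ℝ, 0 < δ → ∃ y' : Fin m → ℝ, ∀ o : Option (Fin s),
      (o.elim d (fun i => A i)) ⬝ᵥ y' ≤ (o.elim r (T.mulVec x + z)) + δ := by
    intro δ hδ
    obtain ⟨_, ⟨y, hy, rfl⟩, hlt⟩ := exists_lt_of_csInf_lt hWne (lt_add_of_pos_right (sInf W) hδ)
    refine ⟨y, fun o => ?_⟩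
    cases o with
    | none => exact hlt.le
    | some i =>
      have := hy i
      simp only [Option.elim]
      simp only [mulVec] at this ⊢
      linarith
  obtain ⟨y2, hy2⟩ := hap 1 one_pos
  obtain ⟨y, hy, -⟩ := H (fun o => o.elim r (T.mulVec x + z)) y2 1 zero_le_one hy2 hap
  refine ⟨y, fun i => hy (some i), fun y' hy' => ?_⟩
  exact (hy none).trans (csInf_le hWb ⟨y', hy', rfl⟩)

theorem psi_lip {n m s : ℕ} (d : Fin m → ℝ)
    (A : Matrix (Fin s) (Fin m) ℝ) (T : Matrix (Fin s) (Fin n) ℝ)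
    (y0 : Fin m → ℝ) (hy0 : ∀ i, (A.mulVec y0) i ≤ -1)
    (hne : ∀ x z, (Psi d A T x z).Nonempty) :
    ∃ K : ℝ, 0 ≤ K ∧ ∀ x z x' z' (δ : ℝ), 0 ≤ δ →
      (∀ i, |(T.mulVec x + z) i - (T.mulVec x' + z') i| ≤ δ) →
      ∀ y ∈ Psi d A T x z, ∃ y' ∈ Psi d A T x' z', ∀ j, |y' j - y j| ≤ K * δ := by
  obtain ⟨L, hL, H⟩ := hoffman_aux m (Option (Fin s)) (fun o => o.elim d (fun i => A i))
  refine ⟨L * (1 + |d ⬝ᵥ y0|), by positivity, fun x z x' z' δ hδ hd y hy => ?_⟩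
  obtain ⟨p, hp, hpmin⟩ := hne x' z'
  have h1 : p + δ • y0 ∈ LowerFeas A T x z := by
    intro i
    have h2 := hp i
    have h3 := (abs_le.1 (hd i)).1
    have h4 := mul_le_mul_of_nonneg_left (hy0 i) hδ
    rw [mulVec_add, mulVec_smul]
    simp only [Pi.add_apply, Pi.smul_apply, smul_eq_mul] at *
    linarith
  have h5 := hy.2 _ h1
  rw [dotProduct_add, dotProduct_smul, smul_eq_mul] at h5
  have h6 := mul_le_mul_of_nonneg_left (le_abs_self (d ⬝ᵥ y0)) hδ
  have h7 : 0 ≤ δ * |d ⬝ᵥ y0| := by positivity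
  obtain ⟨w, hw, hwd⟩ := H (fun o => o.elim (d ⬝ᵥ p) (T.mulVec x' + z')) y
    ((1 + |d ⬝ᵥ y0|) * δ) (by positivity) (by
      intro o
      cases o with
      | none => simp only [Option.elim]; linarith
      | some i =>
        have h8 := hy.1 i
        have h9 := (abs_le.1 (hd i)).2
        simp only [Option.elim]
        simp only [mulVec] at h8 h9 ⊢
        linarith) (by
      intro δ' hδ'
      refine ⟨p, fun o => ?_⟩
      cases o with
      | none => simp only [Option.elim]; linarith
      | some i =>
        have h8 := hp i
        simp only [Option.elim]
        simp only [mulVec] at h8 ⊢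
        linarith)
  refine ⟨w, ⟨fun i => hw (some i), fun y' hy' => (hw none).trans (hpmin y' hy')⟩, fun j => ?_⟩
  rw [mul_assoc]
  exact hwd j

theorem fE_lip {n m s : ℕ}
    (c : Fin n → ℝ) (q d : Fin m → ℝ)
    (A : Matrix (Fin s) (Fin m) ℝ) (T : Matrix (Fin s) (Fin n) ℝ)
    (hdom : (domf c q d A T).Nonempty) (hP : Pfeas A T = Set.univ) :
    ∃ K : ℝ, 0 ≤ K ∧ ∀ x z x' z', |(fE c q d A T x z).toReal - (fE c q d A T x' z').toReal|
      ≤ K * (‖x - x'‖ + ‖z - z'‖) := by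
  have hfeas : ∀ x z, (LowerFeas A T x z).Nonempty := by
    intro x z
    have : (x, z) ∈ Pfeas A T := by rw [hP]; trivial
    exact this
  obtain ⟨y0, hy0'⟩ := hfeas 0 (fun _ => -1)
  have hy0 : ∀ i, (A.mulVec y0) i ≤ -1 := by
    intro i
    have := hy0' i
    simpa using this
  obtain ⟨⟨x0, z0⟩, hd1, hd2⟩ := hdom
  have hne0 : (Psi d A T x0 z0).Nonempty := by
    by_contra h
    rw [not_nonempty_iff_eq_empty] at h
    apply hd1
    simp [fE, h]
  have hne : ∀ x z, (Psi d A T x z).Nonempty := fun x z =>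
    psi_nonempty d A T y0 hy0 x0 z0 hne0 x z (hfeas x z)
  obtain ⟨K, hK, H⟩ := psi_lip d A T y0 hy0 hne
  -- bound on T
  let τ : ℝ := 1 + ∑ i, ∑ j, |T i j|
  have hτ1 : 1 ≤ τ := by
    have : 0 ≤ ∑ i, ∑ j, |T i j| :=
      Finset.sum_nonneg fun i _ => Finset.sum_nonneg fun j _ => abs_nonneg _
    simp only [τ]; linarith
  have hτ : ∀ x z x' z' i, |(T.mulVec x + z) i - (T.mulVec x' + z') i|
      ≤ τ * (‖x - x'‖ + ‖z - z'‖) := by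
    intro x z x' z' i
    have h1 : (T.mulVec x + z) i - (T.mulVec x' + z') i = T i ⬝ᵥ (x - x') + (z - z') i := by
      simp only [mulVec, dotProduct_sub, Pi.add_apply, Pi.sub_apply]; ring
    have h2 : |T i ⬝ᵥ (x - x')| ≤ (∑ j, |T i j|) * ‖x - x'‖ := by
      rw [Finset.sum_mul]
      refine (Finset.abs_sum_le_sum_abs _ _).trans (Finset.sum_le_sum fun j _ => ?_)
      rw [abs_mul]
      exact mul_le_mul_of_nonneg_left (norm_le_pi_norm (x - x') j) (abs_nonneg _)
    have h3 : ∑ j, |T i j| ≤ ∑ i, ∑ j, |T i j| :=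
      Finset.single_le_sum (f := fun i => ∑ j, |T i j|)
        (fun i _ => Finset.sum_nonneg fun j _ => abs_nonneg _) (Finset.mem_univ i)
    have h4 : |(z - z') i| ≤ ‖z - z'‖ := norm_le_pi_norm (z - z') i
    have h5 : (∑ j, |T i j|) ≤ τ := by simp only [τ]; linarith
    have h6 := mul_le_mul_of_nonneg_right h5 (norm_nonneg (x - x'))
    have h7 := mul_le_mul_of_nonneg_right hτ1 (norm_nonneg (z - z'))
    rw [h1]
    refine (abs_add_le _ _).trans ?_
    linarith
  let Q : ℝ := ∑ j, |q j|
  have hQ : 0 ≤ Q := Finset.sum_nonneg fun j _ => abs_nonneg _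
  let Cc : ℝ := ∑ j, |c j|
  have hCc : 0 ≤ Cc := Finset.sum_nonneg fun j _ => abs_nonneg _
  let M : ℝ := Cc + Q * K * τ
  have hM : 0 ≤ M := by positivity
  let N : (Fin n → ℝ) → (Fin s → ℝ) → (Fin n → ℝ) → (Fin s → ℝ) → ℝ :=
    fun x z x' z' => ‖x - x'‖ + ‖z - z'‖
  have hc : ∀ x x' : Fin n → ℝ, c ⬝ᵥ x' - c ⬝ᵥ x ≤ Cc * ‖x - x'‖ := by
    intro x x'
    rw [← dotProduct_sub, ← norm_neg (x - x'), neg_sub]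
    simp only [dotProduct, Cc, Finset.sum_mul]
    refine Finset.sum_le_sum fun j _ => (le_abs_self _).trans ?_
    rw [abs_mul]
    exact mul_le_mul_of_nonneg_left (norm_le_pi_norm (x' - x) j) (abs_nonneg _)
  have hkey : ∀ x z x' z', ∀ y ∈ Psi d A T x z,
      fE c q d A T x' z' ≤ ((c ⬝ᵥ x + q ⬝ᵥ y + M * N x z x' z' : ℝ) : EReal) := by
    intro x z x' z' y hy
    obtain ⟨y', hy', hyd⟩ := H x z x' z' (τ * (‖x - x'‖ + ‖z - z'‖)) (by positivity)
      (hτ x z x' z') y hy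
    have h1 : sInf ((fun y => ((q ⬝ᵥ y : ℝ) : EReal)) '' Psi d A T x' z')
      ≤ ((q ⬝ᵥ y' : ℝ) : EReal) := sInf_le ⟨y', hy', rfl⟩
    have h2 : q ⬝ᵥ y' - q ⬝ᵥ y ≤ Q * (K * (τ * (‖x - x'‖ + ‖z - z'‖))) := by
      rw [← dotProduct_sub]
      simp only [dotProduct, Q, Finset.sum_mul]
      refine Finset.sum_le_sum fun j _ => (le_abs_self _).trans ?_
      rw [abs_mul]
      exact mul_le_mul_of_nonneg_left (hyd j) (abs_nonneg _)
    have h3 := hc x x'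
    have h4 : Cc * ‖x - x'‖ ≤ Cc * (‖x - x'‖ + ‖z - z'‖) :=
      mul_le_mul_of_nonneg_left (by linarith [norm_nonneg (z - z')]) hCc
    refine (add_le_add_right h1 _).trans ?_
    rw [← EReal.coe_add, EReal.coe_le_coe_iff]
    simp only [M, N]
    linarith
  have htop : ∀ x z, fE c q d A T x z ≠ ⊤ := by
    intro x z h
    obtain ⟨y, hy⟩ := hne x z
    have := hkey x z x z y hy
    rw [h, top_le_iff] at this
    exact EReal.coe_ne_top _ this
  have hstep : ∀ x z x' z', fE c q d A T x' z' ≤ fE c q d A T x z + ((M * N x z x' z' : ℝ) : EReal) := by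
    intro x z x' z'
    have h1 : fE c q d A T x' z' - ((c ⬝ᵥ x + M * N x z x' z' : ℝ) : EReal) ≤
        sInf ((fun y => ((q ⬝ᵥ y : ℝ) : EReal)) '' Psi d A T x z) := by
      apply le_sInf
      rintro _ ⟨y, hy, rfl⟩
      rw [EReal.sub_le_iff_le_add (Or.inl (EReal.coe_ne_bot _)) (Or.inl (EReal.coe_ne_top _)),
        ← EReal.coe_add]
      convert hkey x z x' z' y hy using 2
      ring
    rw [EReal.sub_le_iff_le_add (Or.inl (EReal.coe_ne_bot _)) (Or.inl (EReal.coe_ne_top _))] at h1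
    refine h1.trans (le_of_eq ?_)
    rw [EReal.coe_add, fE, ← add_assoc, add_comm (sInf _)]
  have hbot : ∀ x z, fE c q d A T x z ≠ ⊥ := by
    intro x z h
    have := hstep x z x0 z0
    rw [h, EReal.bot_add, le_bot_iff] at this
    exact hd2 this
  have hreal : ∀ x z x' z', (fE c q d A T x' z').toReal ≤ (fE c q d A T x z).toReal + M * N x z x' z' := by
    intro x z x' z'
    have h := hstep x z x' z'
    rw [← EReal.coe_toReal (htop x z) (hbot x z), ← EReal.coe_toReal (htop x' z') (hbot x' z'),
      ← EReal.coe_add, EReal.coe_le_coe_iff] at h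
    exact h
  refine ⟨M, hM, fun x z x' z' => ?_⟩
  have h1 := hreal x z x' z'
  have h2 := hreal x' z' x z
  simp only [N] at h1 h2
  rw [norm_sub_rev x' x, norm_sub_rev z' z] at h2
  rw [abs_le]
  constructor <;> linarith

theorem C2_closed_wrt_weak_convergence {n m s : ℕ}
    (c : Fin n → ℝ) (q d : Fin m → ℝ)
    (A : Matrix (Fin s) (Fin m) ℝ) (T : Matrix (Fin s) (Fin n) ℝ)
    (hdom : (domf c q d A T).Nonempty) (hP : Pfeas A T = Set.univ)
    (X : Set (Fin n → ℝ)) (hXpoly : IsPolyhedron X) (hXne : X.Nonempty)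
    (ν : Measure ℝ) [IsProbabilityMeasure ν]
    (hν : ∫⁻ b, ‖b‖₊ ∂ν < ⊤)
    (μl : ℕ → ProbabilityMeasure (Fin s → ℝ)) (μ : ProbabilityMeasure (Fin s → ℝ))
    (hμlmom : ∀ l : ℕ, ∫⁻ z, ‖z‖₊ ∂((μl l : Measure (Fin s → ℝ))) < ⊤)
    (hμmom : ∫⁻ z, ‖z‖₊ ∂(μ : Measure (Fin s → ℝ)) < ⊤)
    (hμ : Filter.Tendsto μl Filter.atTop (𝓝 μ))
    (xl : ℕ → (Fin n → ℝ)) (x : Fin n → ℝ)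
    (hx : Filter.Tendsto xl Filter.atTop (𝓝 x))
    (hfeas : ∀ l : ℕ, xl l ∈ C2 c q d A T X ν (μl l)) :
    x ∈ C2 c q d A T X ν μ := by
  obtain ⟨K, hK, hLip⟩ := fE_lip c q d A T hdom hP
  have hcont : ∀ (u : Fin n → ℝ) (η : ℝ),
      Continuous fun z => max ((fE c q d A T u z).toReal - η) 0 := by
    intro u η
    have h : LipschitzWith K.toNNReal (fun z => (fE c q d A T u z).toReal) := by
      refine LipschitzWith.of_dist_le_mul fun z z' => ?_
      rw [Real.dist_eq, dist_eq_norm, Real.coe_toNNReal K hK]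
      have := hLip u z u z'
      simpa using this
    exact (h.continuous.sub continuous_const).max continuous_const
  have hint : ∀ (u : Fin n → ℝ) (η : ℝ) (l : ℕ),
      Integrable (fun z => max ((fE c q d A T u z).toReal - η) 0)
        (μl l : Measure (Fin s → ℝ)) := by
    intro u η l
    have hid : Integrable (fun z : Fin s → ℝ => z) (μl l : Measure (Fin s → ℝ)) :=
      ⟨measurable_id.aestronglyMeasurable, hμlmom l⟩
    have hb : Integrable (fun z : Fin s → ℝ => |(fE c q d A T u 0).toReal| + |η| + K * ‖z‖)
        (μl l : Measure (Fin s → ℝ)) :=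
      (integrable_const _).add (hid.norm.const_mul K)
    refine hb.mono' (hcont u η).measurable.aestronglyMeasurable (Eventually.of_forall fun z => ?_)
    have h1 := hLip u z u 0
    simp only [sub_self, norm_zero, zero_add, sub_zero] at h1
    have h2 := (abs_le.1 h1).2
    have h3 := le_abs_self (fE c q d A T u 0).toReal
    have h4 := neg_abs_le η
    rw [Real.norm_eq_abs, abs_of_nonneg (le_max_right _ _)]
    refine max_le (by linarith) (by positivity)
  refine ⟨?_, fun η => ?_⟩
  · obtain ⟨k, B, b, rfl⟩ := hXpoly
    have hcl : IsClosed {x : Fin n → ℝ | B.mulVec x ≤ b} :=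
      isClosed_le (Continuous.matrix_mulVec continuous_const continuous_id) continuous_const
    exact hcl.mem_of_tendsto hx (Eventually.of_forall fun l => (hfeas l).1)
  · set R : ℝ := ∫ b, max (b - η) 0 ∂ν with hR
    have hR0 : 0 ≤ R := integral_nonneg fun b => le_max_right _ _
    have hfat := lintegral_le_liminf_lintegral_of_forall_isOpen_measure_le_liminf_measure
      (μ := (μ : Measure (Fin s → ℝ))) (μs := fun l => (μl l : Measure (Fin s → ℝ)))
      (hcont x η) (fun z => le_max_right _ _)
      (fun G hG => ProbabilityMeasure.le_liminf_measure_open_of_tendsto hμ hG)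
    have hbd : ∀ l, ∫⁻ z, ENNReal.ofReal (max ((fE c q d A T x z).toReal - η) 0)
        ∂(μl l : Measure (Fin s → ℝ)) ≤ ENNReal.ofReal (R + K * ‖x - xl l‖) := by
      intro l
      rw [← ofReal_integral_eq_lintegral_ofReal (hint x η l)
        (Eventually.of_forall fun z => le_max_right _ _)]
      apply ENNReal.ofReal_le_ofReal
      calc ∫ z, max ((fE c q d A T x z).toReal - η) 0 ∂(μl l : Measure (Fin s → ℝ))
          ≤ ∫ z, (max ((fE c q d A T (xl l) z).toReal - η) 0 + K * ‖x - xl l‖)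
            ∂(μl l : Measure (Fin s → ℝ)) := by
            refine integral_mono (hint x η l) ((hint (xl l) η l).add (integrable_const _))
              fun z => ?_
            have h1 := hLip x z (xl l) z
            simp only [sub_self, norm_zero, add_zero] at h1
            have h2 := (abs_le.1 h1).2
            have h3 := le_max_left ((fE c q d A T (xl l) z).toReal - η) 0
            have h4 := le_max_right ((fE c q d A T (xl l) z).toReal - η) 0
            have h5 : 0 ≤ K * ‖x - xl l‖ := by positivity
            exact max_le (by linarith) (by linarith)
        _ = (∫ z, max ((fE c q d A T (xl l) z).toReal - η) 0 ∂(μl l : Measure (Fin s → ℝ)))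
            + K * ‖x - xl l‖ := by
            rw [integral_add (hint (xl l) η l) (integrable_const _)]
            simp
        _ ≤ R + K * ‖x - xl l‖ := by
            have := (hfeas l).2 η
            linarith
    have hlim : Tendsto (fun l => ENNReal.ofReal (R + K * ‖x - xl l‖)) atTop
        (𝓝 (ENNReal.ofReal R)) := by
      apply ENNReal.tendsto_ofReal
      have h1 : Tendsto (fun l => R + K * ‖x - xl l‖) atTop (𝓝 (R + K * ‖x - x‖)) :=
        ((tendsto_const_nhds.sub hx).norm.const_mul K).const_add R
      simpa using h1
    have hfin : ∫⁻ z, ENNReal.ofReal (max ((fE c q d A T x z).toReal - η) 0)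
        ∂(μ : Measure (Fin s → ℝ)) ≤ ENNReal.ofReal R := by
      refine hfat.trans ?_
      rw [← hlim.liminf_eq]
      exact liminf_le_liminf (Eventually.of_forall hbd)
    rw [integral_eq_lintegral_of_nonneg_ae
      (f := fun z => max ((fE c q d A T x z).toReal - η) 0) (Eventually.of_forall fun z => le_max_right _ _)
      (hcont x η).measurable.aestronglyMeasurable]
    exact ENNReal.toReal_le_of_le_ofReal hR0 hfin
end
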